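/- Let X_ρ be a ρ-complete modular space whose modular ρ satisfies the Δ₂-condition, and let G be a ‖·‖_ρ-closed subset of X_ρ, where ‖x‖_ρ = inf{t > 0 : ρ(x/t) ≤ t} is the F-norm associated with ρ. If T : G → G satisfies ρ(Tx − Ty) ≤ c·ρ(x − y) for all x, y ∈ G for some c ∈ [0,1), and sup_{n≥1} ρ(2Tⁿx) < ∞ for some x ∈ G, then T has a fixed point. -/

import Mathlib

open Filter Topology ENNReal NNReal

variable {X : Type*} [AddCommGroup X] [Module ℝ X]

/-- A modular on a real vector space `X`. -/
def IsModular (ρ : X → ℝ≥0∞) : Prop :=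
  (∀ x : X, ρ x = 0 ↔ x = 0) ∧ (∀ x : X, ρ (-x) = ρ x) ∧
    (∀ x y : X, ∀ α β : ℝ, 0 ≤ α → 0 ≤ β → α + β = 1 →
      ρ (α • x + β • y) ≤ ρ x + ρ y)

/-- For `s ∈ (0,1]`, an `s`-convex modular on a real vector space `X`. -/
def IsSConvexModular (ρ : X → ℝ≥0∞) (s : ℝ) : Prop :=
  (∀ x : X, ρ x = 0 ↔ x = 0) ∧ (∀ x : X, ρ (-x) = ρ x) ∧
    (∀ x y : X, ∀ a b : ℝ, 0 ≤ a → 0 ≤ b → a ^ s + b ^ s = 1 →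
      ρ (a • x + b • y) ≤ ENNReal.ofReal (a ^ s) * ρ x + ENNReal.ofReal (b ^ s) * ρ y)

/-- The modular space `X_ρ = {x ∈ X : ρ(αx) → 0 as α → 0}`. -/
def modularSpace (ρ : X → ℝ≥0∞) : Set X :=
  {x : X | Tendsto (fun α : ℝ => ρ (α • x)) (𝓝 0) (𝓝 0)}

/-- `ρ`-convergence of a sequence to a point: `ρ(x_n − a) → 0`. -/
def RhoTendsto (ρ : X → ℝ≥0∞) (x : ℕ → X) (a : X) : Prop :=
  Tendsto (fun n => ρ (x n - a)) atTop (𝓝 0)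

/-- A sequence is `ρ`-Cauchy if `ρ(x_m − x_n) → 0` as `m, n → ∞`. -/
def RhoCauchy (ρ : X → ℝ≥0∞) (x : ℕ → X) : Prop :=
  Tendsto (fun p : ℕ × ℕ => ρ (x p.1 - x p.2)) (atTop ×ˢ atTop) (𝓝 0)

/-- `X_ρ` is `ρ`-complete if every `ρ`-Cauchy sequence in `X_ρ`
is `ρ`-convergent to a point of `X_ρ`. -/
def RhoComplete (ρ : X → ℝ≥0∞) : Prop :=
  ∀ x : ℕ → X, (∀ n, x n ∈ modularSpace ρ) → RhoCauchy ρ x →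
    ∃ a ∈ modularSpace ρ, RhoTendsto ρ x a

/-- The Fatou property of a modular. -/
def FatouProperty (ρ : X → ℝ≥0∞) : Prop :=
  ∀ (x y : ℕ → X) (a b : X), RhoTendsto ρ x a → RhoTendsto ρ y b →
    ρ (a - b) ≤ atTop.liminf (fun n => ρ (x n - y n))

/-- The `Δ₂`-type condition with constant `k`: `ρ(2x) ≤ k·ρ(x)` on `X_ρ`. -/
def Delta2Type (ρ : X → ℝ≥0∞) (k : ℝ≥0) : Prop :=
  ∀ x ∈ modularSpace ρ, ρ ((2 : ℝ) • x) ≤ (k : ℝ≥0∞) * ρ x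

/-- The `Δ₂`-condition: for sequences in `X_ρ`, `ρ(x_n) → 0` implies `ρ(2x_n) → 0`. -/
def Delta2Condition (ρ : X → ℝ≥0∞) : Prop :=
  ∀ x : ℕ → X, (∀ n, x n ∈ modularSpace ρ) →
    Tendsto (fun n => ρ (x n)) atTop (𝓝 0) →
      Tendsto (fun n => ρ ((2 : ℝ) • x n)) atTop (𝓝 0)

/-- The `F`-norm associated with a modular: `‖x‖_ρ = inf {t > 0 : ρ(x/t) ≤ t}`. -/
noncomputable def fnorm (ρ : X → ℝ≥0∞) (x : X) : ℝ :=
  sInf {t : ℝ | 0 < t ∧ ρ (t⁻¹ • x) ≤ ENNReal.ofReal t}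

/-!
By `ρ (x - y) ≤ ρ (2 • x) + ρ (2 • y)` the orbit of `T x` has finite `ρ`-diameter, and `T^[k]`
shrinks this diameter by the factor `c ^ k`, so the orbit is `ρ`-Cauchy. Its `ρ`-limit `a` is mapped
by `T` to a `ρ`-limit of the same orbit, and `ρ`-limits are unique, so `T a = a`.

The `Δ₂`-condition is what brings `a` into `G`: iterated, it turns `ρ (u n) → 0` into
`ρ (2 ^ k • u n) → 0` for every `k`, hence `‖u n‖_ρ ≤ 2⁻ᵏ` eventually, so that `ρ`-convergence
implies convergence in the `F`-norm.
-/

section Modular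

variable {ρ : X → ℝ≥0∞}

theorem smul_mem_modularSpace (r : ℝ) {x : X} (hx : x ∈ modularSpace ρ) :
    r • x ∈ modularSpace ρ := by
  have hmul : Tendsto (fun α : ℝ => α * r) (𝓝 0) (𝓝 0) := by
    simpa using (continuous_mul_const r).tendsto 0
  simpa only [modularSpace, Set.mem_ofPred_eq, Function.comp_def, mul_smul] using
    Tendsto.comp hx hmul

namespace IsModular

theorem map_half_smul_sub_le (hmod : IsModular ρ) (x y : X) :
    ρ ((1 / 2 : ℝ) • (x - y)) ≤ ρ x + ρ y := by
  obtain ⟨-, map_neg, map_convex_le⟩ := hmod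
  calc
    ρ ((1 / 2 : ℝ) • (x - y)) = ρ ((1 / 2 : ℝ) • x + (1 / 2 : ℝ) • -y) := by
      rw [sub_eq_add_neg, smul_add]
    _ ≤ ρ x + ρ (-y) :=
      map_convex_le x (-y) _ _ (by norm_num) (by norm_num) (by norm_num)
    _ = ρ x + ρ y := by rw [map_neg]

theorem map_sub_le (hmod : IsModular ρ) (x y : X) :
    ρ (x - y) ≤ ρ ((2 : ℝ) • x) + ρ ((2 : ℝ) • y) := by
  have hhalf : (1 / 2 : ℝ) • ((2 : ℝ) • x - (2 : ℝ) • y) = x - y := by module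
  simpa only [hhalf] using hmod.map_half_smul_sub_le ((2 : ℝ) • x) ((2 : ℝ) • y)

theorem sub_mem_modularSpace (hmod : IsModular ρ) {x y : X} (hx : x ∈ modularSpace ρ)
    (hy : y ∈ modularSpace ρ) : x - y ∈ modularSpace ρ := by
  have hsum : Tendsto (fun α : ℝ => ρ (α • (2 : ℝ) • x) + ρ (α • (2 : ℝ) • y)) (𝓝 0) (𝓝 0) := by
    simpa only [add_zero] using
      Tendsto.add (smul_mem_modularSpace 2 hx) (smul_mem_modularSpace 2 hy)
  refine tendsto_of_tendsto_of_tendsto_of_le_of_le tendsto_const_nhds hsum (fun _ => zero_le)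
    fun α => ?_
  simpa only [smul_sub, smul_comm α (2 : ℝ)] using hmod.map_sub_le (α • x) (α • y)

theorem eq_of_rhoTendsto (hmod : IsModular ρ) {u : ℕ → X} {a b : X} (ha : RhoTendsto ρ u a)
    (hb : RhoTendsto ρ u b) : a = b := by
  have hle (n : ℕ) : ρ ((1 / 2 : ℝ) • (a - b)) ≤ ρ (u n - b) + ρ (u n - a) := by
    have hsub : u n - b - (u n - a) = a - b := sub_sub_sub_cancel_left ..
    simpa only [hsub] using hmod.map_half_smul_sub_le (u n - b) (u n - a)
  have hsum : Tendsto (fun n => ρ (u n - b) + ρ (u n - a)) atTop (𝓝 0) := by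
    simpa only [add_zero] using Tendsto.add hb ha
  have hzero : ρ ((1 / 2 : ℝ) • (a - b)) = 0 := nonpos_iff_eq_zero.mp (ge_of_tendsto' hsum hle)
  have hhalf : (1 / 2 : ℝ) • (a - b) = 0 := (hmod.1 _).mp hzero
  exact sub_eq_zero.mp ((smul_eq_zero_iff_right (by norm_num)).mp hhalf)

end IsModular

theorem fnorm_nonneg (ρ : X → ℝ≥0∞) (x : X) : 0 ≤ fnorm ρ x :=
  Real.sInf_nonneg fun _ ht => ht.1.le

theorem fnorm_le {x : X} {t : ℝ} (ht : 0 < t) (hρ : ρ (t⁻¹ • x) ≤ ENNReal.ofReal t) :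
    fnorm ρ x ≤ t :=
  csInf_le ⟨0, fun _ hs => hs.1.le⟩ ⟨ht, hρ⟩

/-- `G` contains the limits in `X_ρ` of its `ρ`-convergent sequences. The limit is required
to lie in `X_ρ` because closedness is relative to that subspace. -/
def RhoClosed (ρ : X → ℝ≥0∞) (G : Set X) : Prop :=
  ∀ (u : ℕ → X) (a : X), (∀ n, u n ∈ G) → a ∈ modularSpace ρ → RhoTendsto ρ u a → a ∈ G

namespace Delta2Condition

theorem tendsto_two_pow_smul (hΔ : Delta2Condition ρ) {u : ℕ → X}
    (hu : ∀ n, u n ∈ modularSpace ρ) (hlim : Tendsto (fun n => ρ (u n)) atTop (𝓝 0)) (k : ℕ) :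
    Tendsto (fun n => ρ ((2 : ℝ) ^ k • u n)) atTop (𝓝 0) := by
  induction k with
  | zero => simpa only [pow_zero, one_smul] using hlim
  | succ k ih =>
    simpa only [smul_smul, ← pow_succ'] using
      hΔ _ (fun n => smul_mem_modularSpace ((2 : ℝ) ^ k) (hu n)) ih

theorem tendsto_fnorm (hΔ : Delta2Condition ρ) {u : ℕ → X} (hu : ∀ n, u n ∈ modularSpace ρ)
    (hlim : Tendsto (fun n => ρ (u n)) atTop (𝓝 0)) :
    Tendsto (fun n => fnorm ρ (u n)) atTop (𝓝 0) := by
  refine tendsto_order.mpr ⟨fun b hb => .of_forall fun n => hb.trans_le (fnorm_nonneg ρ (u n)),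
    fun ε hε => ?_⟩
  obtain ⟨k, hk⟩ : ∃ k : ℕ, ((2 : ℝ)⁻¹) ^ k < ε := exists_pow_lt_of_lt_one hε (by norm_num)
  have hpos : (0 : ℝ) < 2⁻¹ ^ k := by positivity
  have hsmall : ∀ᶠ n in atTop, ρ ((2 : ℝ) ^ k • u n) ≤ ENNReal.ofReal (2⁻¹ ^ k) :=
    ENNReal.tendsto_nhds_zero.mp (hΔ.tendsto_two_pow_smul hu hlim k) _
      (ENNReal.ofReal_pos.mpr hpos)
  filter_upwards [hsmall] with n hn
  exact (fnorm_le hpos (by rwa [inv_pow, inv_inv, ← inv_pow])).trans_lt hk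

theorem rhoClosed_of_fnorm_closed (hΔ : Delta2Condition ρ) (hmod : IsModular ρ) {G : Set X}
    (hGsub : G ⊆ modularSpace ρ)
    (hGclosed : ∀ (u : ℕ → X) (a : X), (∀ n, u n ∈ G) → a ∈ modularSpace ρ →
      Tendsto (fun n => fnorm ρ (u n - a)) atTop (𝓝 0) → a ∈ G) :
    RhoClosed ρ G := fun u a hu ha hlim =>
  hGclosed u a hu ha
    (hΔ.tendsto_fnorm (fun n => hmod.sub_mem_modularSpace (hGsub (hu n)) ha) hlim)

end Delta2Condition

end Modular

section Lipschitz

variable {E : Type*} [AddCommGroup E] {ρ : E → ℝ≥0∞}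

theorem rhoCauchy_of_le_of_tendsto {u : ℕ → E} {b : ℕ → ℝ≥0∞}
    (hle : ∀ k m n, k ≤ m → k ≤ n → ρ (u m - u n) ≤ b k) (hb : Tendsto b atTop (𝓝 0)) :
    RhoCauchy ρ u := by
  refine ENNReal.tendsto_nhds_zero.mpr fun ε hε => ?_
  obtain ⟨k, hk⟩ := (ENNReal.tendsto_nhds_zero.mp hb ε hε).exists
  filter_upwards [(eventually_ge_atTop k).prod_mk (eventually_ge_atTop k)] with ⟨m, n⟩ ⟨hm, hn⟩
  exact (hle k m n hm hn).trans hk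

/-- `T` is `c`-Lipschitz on `G` for the modular `ρ`: the analogue of `LipschitzOnWith`, which is a
`ρ`-contraction when `c < 1`. -/
def RhoLipschitzOnWith (ρ : E → ℝ≥0∞) (c : ℝ≥0) (T : E → E) (G : Set E) : Prop :=
  ∀ x ∈ G, ∀ y ∈ G, ρ (T x - T y) ≤ c * ρ (x - y)

namespace RhoLipschitzOnWith

variable {c : ℝ≥0} {T : E → E} {G : Set E}

theorem iterate (hLip : RhoLipschitzOnWith ρ c T G) (hT : Set.MapsTo T G G) (k : ℕ) :
    RhoLipschitzOnWith ρ (c ^ k) T^[k] G := by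
  intro x hx y hy
  induction k with
  | zero => simp
  | succ k ih =>
    calc
      ρ (T^[k + 1] x - T^[k + 1] y) = ρ (T (T^[k] x) - T (T^[k] y)) := by
        simp only [Function.iterate_succ_apply']
      _ ≤ c * ρ (T^[k] x - T^[k] y) := hLip _ (hT.iterate k hx) _ (hT.iterate k hy)
      _ ≤ c * ((c ^ k : ℝ≥0) * ρ (x - y)) := by gcongr
      _ = (c ^ (k + 1) : ℝ≥0) * ρ (x - y) := by rw [← mul_assoc, ← ENNReal.coe_mul, ← pow_succ']

theorem rhoTendsto_comp (hLip : RhoLipschitzOnWith ρ c T G) {u : ℕ → E} {a : E}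
    (hu : ∀ n, u n ∈ G) (ha : a ∈ G) (hlim : RhoTendsto ρ u a) :
    RhoTendsto ρ (fun n => T (u n)) (T a) := by
  have hmul : Tendsto (fun n => (c : ℝ≥0∞) * ρ (u n - a)) atTop (𝓝 0) := by
    simpa only [mul_zero] using ENNReal.Tendsto.const_mul hlim (.inr ENNReal.coe_ne_top)
  exact tendsto_of_tendsto_of_tendsto_of_le_of_le tendsto_const_nhds hmul (fun _ => zero_le)
    fun n => hLip _ (hu n) _ ha

theorem rhoCauchy_iterate (hLip : RhoLipschitzOnWith ρ c T G) (hc : c < 1)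
    (hT : Set.MapsTo T G G) {x : E} (hx : x ∈ G) {M : ℝ≥0∞} (hM : M ≠ ⊤)
    (hbdd : ∀ m n, ρ (T^[m] x - T^[n] x) ≤ M) : RhoCauchy ρ fun n => T^[n] x := by
  have hgeom : Tendsto (fun k : ℕ => ((c ^ k : ℝ≥0) : ℝ≥0∞) * M) atTop (𝓝 0) := by
    have hpow : Tendsto (fun k : ℕ => (c : ℝ≥0∞) ^ k) atTop (𝓝 0) :=
      ENNReal.tendsto_pow_atTop_nhds_zero_of_lt_one (ENNReal.coe_lt_one_iff.mpr hc)
    simpa only [zero_mul, ENNReal.coe_pow] using ENNReal.Tendsto.mul_const hpow (.inr hM)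
  refine rhoCauchy_of_le_of_tendsto (fun k m n hkm hkn => ?_) hgeom
  obtain ⟨i, rfl⟩ := Nat.exists_eq_add_of_le hkm
  obtain ⟨j, rfl⟩ := Nat.exists_eq_add_of_le hkn
  calc
    ρ (T^[k + i] x - T^[k + j] x) = ρ (T^[k] (T^[i] x) - T^[k] (T^[j] x)) := by
      simp only [Function.iterate_add_apply]
    _ ≤ (c ^ k : ℝ≥0) * ρ (T^[i] x - T^[j] x) :=
      hLip.iterate hT k _ (hT.iterate i hx) _ (hT.iterate j hx)
    _ ≤ (c ^ k : ℝ≥0) * M := by gcongr; exact hbdd i j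

end RhoLipschitzOnWith

end Lipschitz

theorem RhoLipschitzOnWith.exists_isFixedPt {ρ : X → ℝ≥0∞} {c : ℝ≥0} {T : X → X} {G : Set X}
    (hLip : RhoLipschitzOnWith ρ c T G) (hc : c < 1) (hmod : IsModular ρ)
    (hcomplete : RhoComplete ρ) (hGsub : G ⊆ modularSpace ρ) (hG : RhoClosed ρ G)
    (hT : Set.MapsTo T G G) {x : X} (hx : x ∈ G) {M : ℝ≥0∞} (hM : M ≠ ⊤)
    (hbdd : ∀ m n, ρ (T^[m] x - T^[n] x) ≤ M) : ∃ z ∈ G, Function.IsFixedPt T z := by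
  have horbit (n : ℕ) : T^[n] x ∈ G := hT.iterate n hx
  obtain ⟨a, ha, hlim⟩ := hcomplete (fun n => T^[n] x) (fun n => hGsub (horbit n))
    (hLip.rhoCauchy_iterate hc hT hx hM hbdd)
  have haG : a ∈ G := hG _ a horbit ha hlim
  have hlimT : RhoTendsto ρ (fun n => T^[n + 1] x) (T a) := by
    simpa only [Function.iterate_succ_apply'] using hLip.rhoTendsto_comp horbit haG hlim
  have hlim_succ : RhoTendsto ρ (fun n => T^[n + 1] x) a := hlim.comp (tendsto_add_atTop_nat 1)
  exact ⟨a, haG, hmod.eq_of_rhoTendsto hlimT hlim_succ⟩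

/-- (Khamsi) Banach contraction principle on an
`‖·‖_ρ`-closed subset of a complete modular space satisfying the
Δ₂-condition. -/
theorem banach_contraction_modular_fnorm_closed (ρ : X → ℝ≥0∞)
    (hmod : IsModular ρ) (hcomplete : RhoComplete ρ) (hΔ : Delta2Condition ρ)
    (G : Set X) (hGsub : G ⊆ modularSpace ρ)
    (hGclosed : ∀ (x : ℕ → X) (a : X), (∀ n, x n ∈ G) → a ∈ modularSpace ρ →
      Tendsto (fun n => fnorm ρ (x n - a)) atTop (𝓝 0) → a ∈ G)
    (T : X → X) (hT : ∀ x ∈ G, T x ∈ G)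
    (c : ℝ≥0) (hc : c < 1)
    (hcontr : ∀ x ∈ G, ∀ y ∈ G, ρ (T x - T y) ≤ (c : ℝ≥0∞) * ρ (x - y))
    (x : X) (hx : x ∈ G)
    (hsup : (⨆ n ≥ 1, ρ ((2 : ℝ) • T^[n] x)) < ⊤) :
    ∃ z ∈ G, T z = z := by
  have hLip : RhoLipschitzOnWith ρ c T G := hcontr
  set M : ℝ≥0∞ := ⨆ n ≥ 1, ρ ((2 : ℝ) • T^[n] x)
  have hdouble (n : ℕ) : ρ ((2 : ℝ) • T^[n] (T x)) ≤ M :=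
    le_iSup₂ (f := fun n (_ : n ≥ 1) => ρ ((2 : ℝ) • T^[n] x)) (n + 1) n.succ_pos
  have hbdd (m n : ℕ) : ρ (T^[m] (T x) - T^[n] (T x)) ≤ M + M :=
    (hmod.map_sub_le _ _).trans (add_le_add (hdouble m) (hdouble n))
  exact hLip.exists_isFixedPt hc hmod hcomplete hGsub
    (hΔ.rhoClosed_of_fnorm_closed hmod hGsub hGclosed) hT (hT x hx)
    (ENNReal.add_ne_top.mpr ⟨hsup.ne, hsup.ne⟩) hbdd
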